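/- Wigner semicircle law for the diagonal of the GUE kernel: for every ε > 0 there is a constant C (depending only on ε) such that for all integers n ≥ 1 and all real x with |x| ≤ (√2 − ε)·√n, the diagonal value Kₙ(x,x) = e^{−x²}/(2ⁿ·(n−1)!·√π) · ( Hₙ'(x)·H_{n−1}(x) − H_{n−1}'(x)·Hₙ(x) ) satisfies | Kₙ(x,x) − (√(2n)/π)·√(1 − x²/(2n)) | ≤ (C/n) · (√(2n)/π)·√(1 − x²/(2n)). -/

import Mathlib

/-!
Consecutive normalized Hermite functions `a = φₙ`, `b = φₙ₋₁` solve `a' = N b - t a`,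
`b' = t b - N a` with `N = √(2n)`, and `K(t) = Kₙ(t, t) = N² (a² + b²) / 2 - N t a b`. The
semicircle law says that `K / w`, with `w = √(N² - t²)`, is almost constant, equal to about `1 / π`.

One computes `(K / w)' = -(N² / 4) (a² - b²)' / w³`. As `a` and `b` oscillate on a scale much
shorter than that of `w`, integration by parts gains a factor of order `1 / N²`, provided `a² + b²`
stays under control; this follows from `K ≥ N (N - t) (a² + b²) / 2` and the monotonicity of
`(N - t) K(t)`, which compare it with `K(0)`. Finally `(π K(0) / N)²` is, up to a factor
`1 + O(1 / n)`, the quotient of `π / 2` by a partial product of Wallis.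
-/

open Real

section ODE

/-- The quadratic form `N / 2 * (a' * b - a * b')`, written out by means of the equations in
`IsHermitePair`. For consecutive Hermite functions `a = φₙ`, `b = φₙ₋₁` and `N = √(2n)` it is the
Christoffel–Darboux expression for the diagonal value `Kₙ(t, t)` of the GUE kernel. -/
noncomputable def diagKernel (N : ℝ) (a b : ℝ → ℝ) (t : ℝ) : ℝ :=
  N ^ 2 / 2 * (a t ^ 2 + b t ^ 2) - N * t * (a t * b t)

/-- The solutions of the first-order system satisfied by consecutive Hermite functions, in which
`N = √(2n)` is the turning point. -/
structure IsHermitePair (N : ℝ) (a b : ℝ → ℝ) : Prop where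
  hasDerivAt_left : ∀ t, HasDerivAt a (N * b t - t * a t) t
  hasDerivAt_right : ∀ t, HasDerivAt b (t * b t - N * a t) t

/-- The boundary term in the integration by parts of the derivative
`-(N ^ 2 / 4) * (a ^ 2 - b ^ 2)' / w ^ 3` of `diagKernel N a b / w`, where `w = √(N ^ 2 - t ^ 2)`;
adding it to `diagKernel N a b / w` leaves a quantity that varies more slowly. -/
noncomputable def boundaryTerm (N : ℝ) (a b : ℝ → ℝ) (t : ℝ) : ℝ :=
  N ^ 2 / 4 * (a t ^ 2 - b t ^ 2) / √(N ^ 2 - t ^ 2) ^ 3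

lemma diagKernel_zero (N : ℝ) (a b : ℝ → ℝ) :
    diagKernel N a b 0 = N ^ 2 / 2 * (a 0 ^ 2 + b 0 ^ 2) := by
  simp [diagKernel]

lemma diagKernel_zero_nonneg (N : ℝ) (a b : ℝ → ℝ) : 0 ≤ diagKernel N a b 0 := by
  rw [diagKernel_zero]
  positivity

lemma mul_sq_add_sq_le_diagKernel {N t : ℝ} (a b : ℝ → ℝ) (hN : 0 ≤ N) (ht : 0 ≤ t) :
    N * (N - t) / 2 * (a t ^ 2 + b t ^ 2) ≤ diagKernel N a b t := by
  have : 0 ≤ N * t / 2 * (a t - b t) ^ 2 := by positivity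
  unfold diagKernel
  linarith

lemma sub_le_sqrt_sq_sub_sq {N t : ℝ} (ht : 0 ≤ t) (htN : t ≤ N) : N - t ≤ √(N ^ 2 - t ^ 2) :=
  le_sqrt_of_sq_le (by nlinarith)

lemma hasDerivAt_sqrt_sq_sub_sq {N t : ℝ} (ht : 0 < N ^ 2 - t ^ 2) :
    HasDerivAt (fun s ↦ √(N ^ 2 - s ^ 2)) (-t / √(N ^ 2 - t ^ 2)) t := by
  refine ((((hasDerivAt_id' t).fun_pow 2).const_sub (N ^ 2)).sqrt ht.ne').congr_deriv ?_
  push_cast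
  ring

namespace IsHermitePair

variable {N t x : ℝ} {a b : ℝ → ℝ}

lemma comp_neg (h : IsHermitePair N a b) :
    IsHermitePair N (fun t ↦ a (-t)) (fun t ↦ -b (-t)) where
  hasDerivAt_left t :=
    ((h.hasDerivAt_left (-t)).scomp t (hasDerivAt_neg t)).congr_deriv (by simp; ring)
  hasDerivAt_right t :=
    ((h.hasDerivAt_right (-t)).scomp t (hasDerivAt_neg t)).neg.congr_deriv (by simp; ring)

lemma hasDerivAt_diagKernel (h : IsHermitePair N a b) (t : ℝ) :
    HasDerivAt (diagKernel N a b) (-(N * (a t * b t))) t := by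
  have ha := h.hasDerivAt_left t
  have hb := h.hasDerivAt_right t
  refine ((((ha.fun_pow 2).fun_add (hb.fun_pow 2)).const_mul (N ^ 2 / 2)).fun_sub
    (((hasDerivAt_id' t).const_mul N).fun_mul (ha.fun_mul hb))).congr_deriv ?_
  push_cast
  ring

lemma hasDerivAt_sq_sub_sq (h : IsHermitePair N a b) (t : ℝ) :
    HasDerivAt (fun s ↦ a s ^ 2 - b s ^ 2)
      (4 * N * (a t * b t) - 2 * t * (a t ^ 2 + b t ^ 2)) t := by
  refine (((h.hasDerivAt_left t).fun_pow 2).fun_sub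
    ((h.hasDerivAt_right t).fun_pow 2)).congr_deriv ?_
  push_cast
  ring

lemma antitoneOn_sub_mul_diagKernel (h : IsHermitePair N a b) :
    AntitoneOn (fun t ↦ (N - t) * diagKernel N a b t) (Set.Icc 0 N) := by
  have hderiv (t : ℝ) : HasDerivAt (fun t ↦ (N - t) * diagKernel N a b t)
      (-diagKernel N a b t - (N - t) * (N * (a t * b t))) t :=
    (((hasDerivAt_id' t).const_sub N).fun_mul (h.hasDerivAt_diagKernel t)).congr_deriv (by ring)
  refine antitoneOn_of_hasDerivWithinAt_nonpos (convex_Icc 0 N)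
    (fun t _ ↦ (hderiv t).continuousAt.continuousWithinAt)
    (fun t _ ↦ (hderiv t).hasDerivWithinAt) fun t ht ↦ ?_
  rw [interior_Icc] at ht
  have hlow := mul_sq_add_sq_le_diagKernel a b (ht.1.trans ht.2).le ht.1.le
  have hN : 0 ≤ N * (N - t) / 2 * (a t + b t) ^ 2 := by
    have := sub_pos.2 ht.2
    have := ht.1.trans ht.2
    positivity
  linarith

lemma sq_add_sq_le (h : IsHermitePair N a b) (ht : 0 ≤ t) (htN : t < N) :
    a t ^ 2 + b t ^ 2 ≤ 2 * diagKernel N a b 0 / (N - t) ^ 2 := by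
  have hN : 0 < N := ht.trans_lt htN
  have : 0 < N - t := sub_pos.2 htN
  have hanti : (N - t) * diagKernel N a b t ≤ N * diagKernel N a b 0 := by
    simpa using h.antitoneOn_sub_mul_diagKernel ⟨le_rfl, hN.le⟩ ⟨ht, htN.le⟩ ht
  rw [le_div_iff₀ (by positivity)]
  refine le_of_mul_le_mul_left ?_ hN
  calc N * ((a t ^ 2 + b t ^ 2) * (N - t) ^ 2)
      = 2 * ((N - t) * (N * (N - t) / 2 * (a t ^ 2 + b t ^ 2))) := by ring
    _ ≤ 2 * ((N - t) * diagKernel N a b t) := by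
      gcongr
      exact mul_sq_add_sq_le_diagKernel a b hN.le ht
    _ ≤ N * (2 * diagKernel N a b 0) := by linarith

lemma abs_sq_sub_sq_le (h : IsHermitePair N a b) (ht : 0 ≤ t) (htN : t < N) :
    |a t ^ 2 - b t ^ 2| ≤ 2 * diagKernel N a b 0 / (N - t) ^ 2 := by
  refine le_trans ?_ (h.sq_add_sq_le ht htN)
  exact abs_le.2 ⟨by linarith [sq_nonneg (a t)], by linarith [sq_nonneg (b t)]⟩

lemma hasDerivAt_diagKernel_div_sqrt (h : IsHermitePair N a b) (ht : 0 < N ^ 2 - t ^ 2) :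
    HasDerivAt (fun s ↦ diagKernel N a b s / √(N ^ 2 - s ^ 2))
      (-(N ^ 2 / 4 * (4 * N * (a t * b t) - 2 * t * (a t ^ 2 + b t ^ 2)) /
        √(N ^ 2 - t ^ 2) ^ 3)) t := by
  have hw : 0 < √(N ^ 2 - t ^ 2) := sqrt_pos.2 ht
  have hw2 : √(N ^ 2 - t ^ 2) ^ 2 = N ^ 2 - t ^ 2 := sq_sqrt ht.le
  refine ((h.hasDerivAt_diagKernel t).fun_div (hasDerivAt_sqrt_sq_sub_sq ht) hw.ne').congr_deriv ?_
  field_simp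
  rw [hw2, diagKernel]
  ring

lemma hasDerivAt_boundaryTerm (h : IsHermitePair N a b) (ht : 0 < N ^ 2 - t ^ 2) :
    HasDerivAt (boundaryTerm N a b)
      (N ^ 2 / 4 * (4 * N * (a t * b t) - 2 * t * (a t ^ 2 + b t ^ 2)) / √(N ^ 2 - t ^ 2) ^ 3 +
        3 * N ^ 2 / 4 * t * (a t ^ 2 - b t ^ 2) / √(N ^ 2 - t ^ 2) ^ 5) t := by
  have hw : 0 < √(N ^ 2 - t ^ 2) := sqrt_pos.2 ht
  refine (((h.hasDerivAt_sq_sub_sq t).const_mul (N ^ 2 / 4)).fun_div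
    ((hasDerivAt_sqrt_sq_sub_sq ht).fun_pow 3) (pow_pos hw 3).ne').congr_deriv ?_
  field_simp
  push_cast
  ring

lemma abs_boundaryTerm_le (h : IsHermitePair N a b) (ht : 0 ≤ t) (htN : t < N) :
    |boundaryTerm N a b t| ≤ N ^ 2 * diagKernel N a b 0 / (2 * (N - t) ^ 5) := by
  have hgap : 0 < N - t := sub_pos.2 htN
  have hw : N - t ≤ √(N ^ 2 - t ^ 2) := sub_le_sqrt_sq_sub_sq ht htN.le
  have hK := diagKernel_zero_nonneg N a b
  rw [boundaryTerm, abs_div, abs_mul, abs_of_nonneg (by positivity : 0 ≤ N ^ 2 / 4),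
    abs_of_nonneg (by positivity : 0 ≤ √(N ^ 2 - t ^ 2) ^ 3)]
  calc N ^ 2 / 4 * |a t ^ 2 - b t ^ 2| / √(N ^ 2 - t ^ 2) ^ 3
      ≤ N ^ 2 / 4 * (2 * diagKernel N a b 0 / (N - t) ^ 2) / (N - t) ^ 3 := by
        gcongr
        exact h.abs_sq_sub_sq_le ht htN
    _ = N ^ 2 * diagKernel N a b 0 / (2 * (N - t) ^ 5) := by field_simp; norm_num

lemma hasDerivAt_diagKernel_div_sqrt_add_boundaryTerm (h : IsHermitePair N a b)
    (ht : 0 < N ^ 2 - t ^ 2) :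
    HasDerivAt (fun s ↦ diagKernel N a b s / √(N ^ 2 - s ^ 2) + boundaryTerm N a b s)
      (3 * N ^ 2 / 4 * t * (a t ^ 2 - b t ^ 2) / √(N ^ 2 - t ^ 2) ^ 5) t :=
  ((h.hasDerivAt_diagKernel_div_sqrt ht).fun_add
    (h.hasDerivAt_boundaryTerm ht)).congr_deriv (by ring)

lemma abs_sq_sub_sq_div_pow_five_le (h : IsHermitePair N a b) (ht : 0 ≤ t) (htN : t < N) :
    |3 * N ^ 2 / 4 * t * (a t ^ 2 - b t ^ 2) / √(N ^ 2 - t ^ 2) ^ 5| ≤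
      3 * N ^ 3 * diagKernel N a b 0 / (2 * (N - t) ^ 7) := by
  have hgap : 0 < N - t := sub_pos.2 htN
  have hw : N - t ≤ √(N ^ 2 - t ^ 2) := sub_le_sqrt_sq_sub_sq ht htN.le
  have hK := diagKernel_zero_nonneg N a b
  rw [abs_div, abs_mul, abs_of_nonneg (by positivity : 0 ≤ 3 * N ^ 2 / 4 * t),
    abs_of_nonneg (by positivity : 0 ≤ √(N ^ 2 - t ^ 2) ^ 5)]
  calc 3 * N ^ 2 / 4 * t * |a t ^ 2 - b t ^ 2| / √(N ^ 2 - t ^ 2) ^ 5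
      ≤ 3 * N ^ 2 / 4 * N * (2 * diagKernel N a b 0 / (N - t) ^ 2) / (N - t) ^ 5 := by
        have hN : 0 ≤ N := ht.trans htN.le
        gcongr
        exact h.abs_sq_sub_sq_le ht htN
    _ = 3 * N ^ 3 * diagKernel N a b 0 / (2 * (N - t) ^ 7) := by field_simp; norm_num

lemma abs_diagKernel_div_sqrt_add_boundaryTerm_sub_le (h : IsHermitePair N a b) (hx : 0 ≤ x)
    (hxN : x < N) :
    |(diagKernel N a b x / √(N ^ 2 - x ^ 2) + boundaryTerm N a b x) -
        (diagKernel N a b 0 / N + boundaryTerm N a b 0)| ≤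
      3 * N ^ 4 * diagKernel N a b 0 / (2 * (N - x) ^ 7) := by
  have hN : 0 < N := hx.trans_lt hxN
  have : 0 < N - x := sub_pos.2 hxN
  have hK := diagKernel_zero_nonneg N a b
  have hderiv : ∀ t ∈ Set.Icc 0 x, HasDerivWithinAt
      (fun t ↦ diagKernel N a b t / √(N ^ 2 - t ^ 2) + boundaryTerm N a b t)
      (3 * N ^ 2 / 4 * t * (a t ^ 2 - b t ^ 2) / √(N ^ 2 - t ^ 2) ^ 5) (Set.Icc 0 x) t := by
    intro t ht
    have ht2 : 0 < N ^ 2 - t ^ 2 := by nlinarith [ht.1, ht.2]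
    exact (h.hasDerivAt_diagKernel_div_sqrt_add_boundaryTerm ht2).hasDerivWithinAt
  have hbound : ∀ t ∈ Set.Ico 0 x,
      ‖3 * N ^ 2 / 4 * t * (a t ^ 2 - b t ^ 2) / √(N ^ 2 - t ^ 2) ^ 5‖ ≤
        3 * N ^ 3 * diagKernel N a b 0 / (2 * (N - x) ^ 7) := by
    intro t ht
    refine (h.abs_sq_sub_sq_div_pow_five_le ht.1 (ht.2.trans hxN)).trans ?_
    gcongr
    exact ht.2.le
  have hmvt := norm_image_sub_le_of_norm_deriv_le_segment' hderiv hbound x ⟨hx, le_rfl⟩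
  simp only [norm_eq_abs, sub_zero, zero_pow two_ne_zero, sqrt_sq hN.le] at hmvt
  calc _ ≤ 3 * N ^ 3 * diagKernel N a b 0 / (2 * (N - x) ^ 7) * x := hmvt
    _ ≤ 3 * N ^ 3 * diagKernel N a b 0 / (2 * (N - x) ^ 7) * N := by gcongr
    _ = 3 * N ^ 4 * diagKernel N a b 0 / (2 * (N - x) ^ 7) := by ring

lemma abs_diagKernel_div_sqrt_sub_le_of_nonneg (h : IsHermitePair N a b) (hx : 0 ≤ x)
    (hxN : x < N) :
    |diagKernel N a b x / √(N ^ 2 - x ^ 2) - diagKernel N a b 0 / N| ≤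
      5 / 2 * (N ^ 5 / (N - x) ^ 7) * (diagKernel N a b 0 / N) := by
  have hN : 0 < N := hx.trans_lt hxN
  have : 0 < N - x := sub_pos.2 hxN
  have hK := diagKernel_zero_nonneg N a b
  have hcorr : ∀ t ∈ Set.Icc 0 x,
      |boundaryTerm N a b t| ≤ N ^ 4 * diagKernel N a b 0 / (2 * (N - x) ^ 7) := by
    intro t ht
    refine (h.abs_boundaryTerm_le ht.1 (ht.2.trans_lt hxN)).trans ?_
    calc N ^ 2 * diagKernel N a b 0 / (2 * (N - t) ^ 5)
        ≤ N ^ 2 * diagKernel N a b 0 / (2 * (N - x) ^ 5) := by gcongr; exact ht.2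
      _ = (N - x) ^ 2 * N ^ 2 * diagKernel N a b 0 / (2 * (N - x) ^ 7) := by field_simp
      _ ≤ N ^ 2 * N ^ 2 * diagKernel N a b 0 / (2 * (N - x) ^ 7) := by gcongr; linarith
      _ = N ^ 4 * diagKernel N a b 0 / (2 * (N - x) ^ 7) := by ring
  have hcorrected := h.abs_diagKernel_div_sqrt_add_boundaryTerm_sub_le hx hxN
  have hsum : 5 / 2 * (N ^ 5 / (N - x) ^ 7) * (diagKernel N a b 0 / N) =
      3 * N ^ 4 * diagKernel N a b 0 / (2 * (N - x) ^ 7) +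
        N ^ 4 * diagKernel N a b 0 / (2 * (N - x) ^ 7) +
        N ^ 4 * diagKernel N a b 0 / (2 * (N - x) ^ 7) := by
    field_simp
    ring
  have hcorr0 := hcorr 0 ⟨le_rfl, hx⟩
  have hcorrx := hcorr x ⟨hx, le_rfl⟩
  rw [hsum]
  rw [abs_le] at *
  constructor <;> linarith

theorem abs_diagKernel_div_sqrt_sub_le (h : IsHermitePair N a b) (hx : |x| < N) :
    |diagKernel N a b x / √(N ^ 2 - x ^ 2) - diagKernel N a b 0 / N| ≤
      5 / 2 * (N ^ 5 / (N - |x|) ^ 7) * (diagKernel N a b 0 / N) := by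
  rcases le_total 0 x with hx0 | hx0
  · rw [abs_of_nonneg hx0] at hx ⊢
    exact h.abs_diagKernel_div_sqrt_sub_le_of_nonneg hx0 hx
  · rw [abs_of_nonpos hx0] at hx ⊢
    simpa [diagKernel] using
      h.comp_neg.abs_diagKernel_div_sqrt_sub_le_of_nonneg (neg_nonneg.2 hx0) hx

end IsHermitePair

end ODE

section Hermite

open Polynomial
open scoped Nat

lemma derivative_hermite_succ (n : ℕ) :
    derivative (hermite (n + 1)) = ((n : ℤ[X]) + 1) * hermite n := by
  induction n with
  | zero => simp
  | succ k ih =>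
    have hconst : derivative ((k : ℤ[X]) + 1) = 0 := by simp
    rw [hermite_succ (k + 1), derivative_sub, derivative_mul, derivative_X, ih, derivative_mul,
      hconst, hermite_succ k]
    push_cast
    ring

/-- The `n`-th Hermite function `φₙ`, normalized in `L²(ℝ)`, in terms of the probabilists'
Hermite polynomial. -/
noncomputable def hermiteFunction (n : ℕ) (x : ℝ) : ℝ :=
  exp (-x ^ 2 / 2) * aeval (x * √2) (hermite n) / √(n ! * √π)

/-- The `n`-th physicists' Hermite polynomial, as a function on `ℝ`. -/
noncomputable def physHermite (n : ℕ) (x : ℝ) : ℝ :=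
  2 ^ ((n : ℝ) / 2) * aeval (x * √2) (hermite n)

/-- The diagonal value `Kₙ₊₁(x, x)` of the kernel of the `(n + 1) × (n + 1)` GUE. -/
noncomputable def gueDiagKernel (n : ℕ) : ℝ → ℝ :=
  diagKernel √(2 * (n + 1 : ℕ)) (hermiteFunction (n + 1)) (hermiteFunction n)

lemma sqrt_factorial_succ_mul (n : ℕ) (c : ℝ) :
    √((n + 1)! * c) = √(n + 1 : ℕ) * √(n ! * c) := by
  rw [Nat.factorial_succ, Nat.cast_mul, mul_assoc, sqrt_mul (Nat.cast_nonneg _)]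

lemma hasDerivAt_gaussian_mul_aeval (p : ℤ[X]) (c x : ℝ) :
    HasDerivAt (fun x ↦ exp (-x ^ 2 / 2) * aeval (x * √2) p / c)
      (√2 * (exp (-x ^ 2 / 2) * aeval (x * √2) (derivative p) / c) -
        x * (exp (-x ^ 2 / 2) * aeval (x * √2) p / c)) x := by
  have hexp := ((((hasDerivAt_id' x).fun_pow 2).fun_neg).div_const 2).exp
  have hp := (p.hasDerivAt_aeval (x * √2)).scomp x ((hasDerivAt_id' x).mul_const √2)
  refine ((hexp.fun_mul hp).div_const c).congr_deriv ?_
  simp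
  ring

lemma hasDerivAt_hermiteFunction_succ (n : ℕ) (x : ℝ) :
    HasDerivAt (hermiteFunction (n + 1))
      (√(2 * (n + 1 : ℕ)) * hermiteFunction n x - x * hermiteFunction (n + 1) x) x := by
  refine (hasDerivAt_gaussian_mul_aeval (hermite (n + 1)) √((n + 1)! * √π) x).congr_deriv ?_
  have hn : √(n + 1 : ℕ) ^ 2 = n + 1 := by rw [sq_sqrt (Nat.cast_nonneg _), Nat.cast_succ]
  have : 0 < √(n + 1 : ℕ) := sqrt_pos.2 (by positivity)
  rw [derivative_hermite_succ, sqrt_mul zero_le_two]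
  simp only [hermiteFunction, sqrt_factorial_succ_mul, map_mul, map_add, map_natCast, map_one]
  field_simp
  rw [hn]
  ring

lemma hasDerivAt_hermiteFunction (n : ℕ) (x : ℝ) :
    HasDerivAt (hermiteFunction n)
      (x * hermiteFunction n x - √(2 * (n + 1 : ℕ)) * hermiteFunction (n + 1) x) x := by
  refine (hasDerivAt_gaussian_mul_aeval (hermite n) √(n ! * √π) x).congr_deriv ?_
  have h2 : √2 ^ 2 = 2 := sq_sqrt zero_le_two
  have : 0 < √(n + 1 : ℕ) := sqrt_pos.2 (by positivity)
  rw [sqrt_mul zero_le_two]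
  simp only [hermiteFunction, sqrt_factorial_succ_mul, hermite_succ, map_sub, map_mul, aeval_X]
  field_simp
  linear_combination (x * aeval (√2 * x) (hermite n)) * h2

lemma isHermitePair_hermiteFunction (n : ℕ) :
    IsHermitePair √(2 * (n + 1 : ℕ)) (hermiteFunction (n + 1)) (hermiteFunction n) :=
  ⟨hasDerivAt_hermiteFunction_succ n, hasDerivAt_hermiteFunction n⟩

lemma physHermite_eq (n : ℕ) : physHermite n = fun x ↦
    2 ^ ((n : ℝ) / 2) * √(n ! * √π) * (exp (x ^ 2 / 2) * hermiteFunction n x) := by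
  funext x
  have : 0 < √(n ! * √π) := by positivity
  rw [physHermite, hermiteFunction, neg_div, exp_neg]
  field_simp

lemma hasDerivAt_physHermite {n : ℕ} {x φ' : ℝ} (h : HasDerivAt (hermiteFunction n) φ' x) :
    HasDerivAt (physHermite n) (2 ^ ((n : ℝ) / 2) * √(n ! * √π) *
      (exp (x ^ 2 / 2) * (x * hermiteFunction n x + φ'))) x := by
  rw [physHermite_eq]
  have hexp := ((((hasDerivAt_id' x).fun_pow 2)).div_const 2).exp
  refine ((hexp.fun_mul h).const_mul _).congr_deriv ?_
  push_cast
  ring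

lemma physHermite_normalization (n : ℕ) :
    (2 ^ (((n + 1 : ℕ) : ℝ) / 2) * √((n + 1)! * √π)) * (2 ^ ((n : ℝ) / 2) * √(n ! * √π)) =
      2 ^ n * (n ! * √π) * √(2 * (n + 1 : ℕ)) := by
  have hpow : (2 : ℝ) ^ (((n + 1 : ℕ) : ℝ) / 2) * 2 ^ ((n : ℝ) / 2) = 2 ^ n * √2 := by
    rw [sqrt_eq_rpow, ← rpow_natCast, ← rpow_add two_pos, ← rpow_add two_pos]
    congr 1
    push_cast
    ring
  have hfact : √(n ! * √π) ^ 2 = n ! * √π := sq_sqrt (by positivity)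
  rw [sqrt_factorial_succ_mul, sqrt_mul zero_le_two]
  linear_combination √(n + 1 : ℕ) * √(n ! * √π) ^ 2 * hpow +
    2 ^ n * √2 * √(n + 1 : ℕ) * hfact

lemma gueDiagKernel_eq_wronskian (n : ℕ) (x : ℝ) :
    gueDiagKernel n x = exp (-x ^ 2) / (2 ^ (n + 1) * n ! * √π) *
      (deriv (physHermite (n + 1)) x * physHermite n x -
        deriv (physHermite n) x * physHermite (n + 1) x) := by
  rw [(hasDerivAt_physHermite (hasDerivAt_hermiteFunction_succ n x)).deriv,
    (hasDerivAt_physHermite (hasDerivAt_hermiteFunction n x)).deriv,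
    physHermite_eq n, physHermite_eq (n + 1), gueDiagKernel, diagKernel]
  have hexp : exp (-x ^ 2) * exp (x ^ 2 / 2) ^ 2 = 1 := by
    rw [← exp_nat_mul, ← exp_add, exp_eq_one_iff]
    push_cast
    ring
  have hnorm := physHermite_normalization n
  set c₁ := 2 ^ (((n + 1 : ℕ) : ℝ) / 2) * √((n + 1)! * √π)
  set c₀ := 2 ^ ((n : ℝ) / 2) * √(n ! * √π)
  set u := hermiteFunction (n + 1) x
  set v := hermiteFunction n x
  set N := √(2 * (n + 1 : ℕ))
  calc N ^ 2 / 2 * (u ^ 2 + v ^ 2) - N * x * (u * v)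
      = (exp (-x ^ 2) * exp (x ^ 2 / 2) ^ 2) * (2 ^ n * (n ! * √π) * N) /
          (2 ^ (n + 1) * n ! * √π) * (N * (u ^ 2 + v ^ 2) - 2 * x * (u * v)) := by
        rw [hexp]
        field_simp
        ring
    _ = _ := by
        rw [← hnorm]
        ring

end Hermite

section Center

open scoped Nat

lemma add_two_mul_hermiteFunction_add_two_zero_sq (n : ℕ) :
    (n + 2) * hermiteFunction (n + 2) 0 ^ 2 = (n + 1) * hermiteFunction n 0 ^ 2 := by
  have h := (hasDerivAt_hermiteFunction_succ n 0).unique (hasDerivAt_hermiteFunction (n + 1) 0)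
  have hsq := congrArg (· ^ 2) h
  simp only [zero_mul, sub_zero, zero_sub, neg_sq, mul_pow] at hsq
  rw [sq_sqrt (by positivity), sq_sqrt (by positivity)] at hsq
  push_cast at hsq
  linarith

lemma hermiteFunction_odd_zero (k : ℕ) : hermiteFunction (2 * k + 1) 0 = 0 := by
  induction k with
  | zero => simp [hermiteFunction]
  | succ k ih =>
    have h := add_two_mul_hermiteFunction_add_two_zero_sq (2 * k + 1)
    rw [ih, zero_pow two_ne_zero, mul_zero, mul_eq_zero] at h
    exact pow_eq_zero_iff two_ne_zero |>.1 (h.resolve_left (by positivity))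

lemma wallis_mul_hermiteFunction_even_zero (k : ℕ) :
    Wallis.W k * ((2 * k + 1) * (π * hermiteFunction (2 * k) 0 ^ 4)) = 1 := by
  induction k with
  | zero =>
    have h4 : √√π ^ 4 = π := by
      rw [show 4 = 2 * 2 from rfl, pow_mul, sq_sqrt (sqrt_nonneg π), sq_sqrt pi_nonneg]
    simp [hermiteFunction, Wallis.W, h4, pi_ne_zero]
  | succ k ih =>
    have h := add_two_mul_hermiteFunction_add_two_zero_sq (2 * k)
    have hstep : hermiteFunction (2 * (k + 1)) 0 ^ 2 =
        (2 * k + 1) / (2 * k + 2) * hermiteFunction (2 * k) 0 ^ 2 := by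
      push_cast at h
      rw [div_mul_eq_mul_div, eq_div_iff (by positivity), ← h, mul_comm, mul_add_one]
    rw [show 4 = 2 * 2 from rfl, pow_mul] at ih ⊢
    refine Eq.trans ?_ ih
    rw [hstep, Wallis.W_succ]
    push_cast
    field_simp
    ring

lemma one_le_pi_div_two_div_wallis (k : ℕ) : 1 ≤ π / 2 / Wallis.W k :=
  (one_le_div (Wallis.W_pos k)).2 (Wallis.W_le k)

lemma pi_div_two_div_wallis_le (k : ℕ) :
    π / 2 / Wallis.W k ≤ (2 * k + 2) / (2 * k + 1) := by
  have h := Wallis.le_W k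
  rw [div_mul_eq_mul_div, div_le_iff₀ (by positivity)] at h
  rw [div_le_div_iff₀ (Wallis.W_pos k) (by positivity)]
  linarith

lemma pi_mul_gueDiagKernel_zero_div (n : ℕ) :
    π * (gueDiagKernel n 0 / √(2 * (n + 1 : ℕ))) =
      π * √(2 * (n + 1 : ℕ)) / 2 * (hermiteFunction (n + 1) 0 ^ 2 + hermiteFunction n 0 ^ 2) := by
  have : 0 < √(2 * (n + 1 : ℕ)) := sqrt_pos.2 (by positivity)
  rw [gueDiagKernel, diagKernel_zero]
  field_simp

lemma sq_pi_mul_gueDiagKernel_even_zero_div (k : ℕ) :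
    (π * (gueDiagKernel (2 * k) 0 / √(2 * (2 * k + 1 : ℕ)))) ^ 2 = π / 2 / Wallis.W k := by
  rw [pi_mul_gueDiagKernel_zero_div, hermiteFunction_odd_zero, mul_pow, div_pow, mul_pow,
    sq_sqrt (by positivity), eq_div_iff (Wallis.W_pos k).ne']
  push_cast
  linear_combination π / 2 * wallis_mul_hermiteFunction_even_zero k

lemma sq_pi_mul_gueDiagKernel_odd_zero_div (k : ℕ) :
    (π * (gueDiagKernel (2 * k + 1) 0 / √(2 * (2 * k + 1 + 1 : ℕ)))) ^ 2 =
      (2 * k + 2) / (2 * k + 3) * (π / 2 / Wallis.W (k + 1)) := by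
  have h := wallis_mul_hermiteFunction_even_zero (k + 1)
  have hW := Wallis.W_pos (k + 1)
  rw [pi_mul_gueDiagKernel_zero_div, hermiteFunction_odd_zero, mul_pow, div_pow, mul_pow,
    sq_sqrt (by positivity), div_mul_div_comm, eq_div_iff (by positivity)]
  rw [show 2 * k + 1 + 1 = 2 * (k + 1) by ring]
  push_cast at h ⊢
  linear_combination (2 * k + 2) * (π / 2) * h

lemma abs_sq_pi_mul_gueDiagKernel_zero_div_sub_one_le (n : ℕ) :
    |(π * (gueDiagKernel n 0 / √(2 * (n + 1 : ℕ)))) ^ 2 - 1| ≤ (1 : ℝ) / (n + 1 : ℕ) := by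
  rcases Nat.even_or_odd' n with ⟨k, rfl | rfl⟩
  · rw [sq_pi_mul_gueDiagKernel_even_zero_div,
      abs_of_nonneg (sub_nonneg.2 (one_le_pi_div_two_div_wallis k))]
    calc π / 2 / Wallis.W k - 1 ≤ (2 * k + 2) / (2 * k + 1) - 1 :=
          sub_le_sub_right (pi_div_two_div_wallis_le k) 1
      _ = 1 / (2 * k + 1 : ℕ) := by push_cast; field_simp; ring
  · rw [sq_pi_mul_gueDiagKernel_odd_zero_div]
    have hlow := one_le_pi_div_two_div_wallis (k + 1)
    have hupp := pi_div_two_div_wallis_le (k + 1)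
    set r := π / 2 / Wallis.W (k + 1)
    push_cast at hupp ⊢
    have hlower : (2 * (k : ℝ) + 2) / (2 * k + 3) ≤ (2 * k + 2) / (2 * k + 3) * r :=
      le_mul_of_one_le_right (by positivity) hlow
    have hupper : (2 * (k : ℝ) + 2) / (2 * k + 3) * r ≤ 1 := by
      calc (2 * (k : ℝ) + 2) / (2 * k + 3) * r
          ≤ (2 * k + 2) / (2 * k + 3) * ((2 * (k + 1) + 2) / (2 * (k + 1) + 1)) := by gcongr
        _ ≤ 1 := by
          rw [div_mul_div_comm, div_le_one (by positivity)]
          nlinarith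
    rw [abs_sub_comm, abs_of_nonneg (sub_nonneg.2 hupper)]
    calc 1 - (2 * (k : ℝ) + 2) / (2 * k + 3) * r ≤ 1 - (2 * k + 2) / (2 * k + 3) :=
          sub_le_sub_left hlower 1
      _ = 1 / (2 * k + 3) := by field_simp; ring
      _ ≤ 1 / (2 * k + 1 + 1) := one_div_le_one_div_of_le (by positivity) (by linarith)

lemma abs_sub_one_le_abs_sq_sub_one {y : ℝ} (hy : 0 ≤ y) : |y - 1| ≤ |y ^ 2 - 1| := by
  rw [show y ^ 2 - 1 = (y - 1) * (y + 1) by ring, abs_mul, abs_of_pos (by positivity : 0 < y + 1)]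
  exact le_mul_of_one_le_right (abs_nonneg _) (by linarith)

lemma abs_pi_mul_gueDiagKernel_zero_div_sub_one_le (n : ℕ) :
    |π * (gueDiagKernel n 0 / √(2 * (n + 1 : ℕ))) - 1| ≤ (1 : ℝ) / (n + 1 : ℕ) := by
  have hK : 0 ≤ gueDiagKernel n 0 := diagKernel_zero_nonneg ..
  exact (abs_sub_one_le_abs_sq_sub_one (by positivity)).trans
    (abs_sq_pi_mul_gueDiagKernel_zero_div_sub_one_le n)

end Center

section Semicircle

lemma abs_sub_one_le_of_abs_sub_le_mul {p y r s : ℝ} (hr : 0 ≤ r) (hs : s ≤ 1)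
    (hp : |p - y| ≤ r * y) (hy : |y - 1| ≤ s) : |p - 1| ≤ 2 * r + s := by
  have hy2 : y ≤ 2 := by linarith [(abs_le.1 hy).2]
  calc |p - 1| ≤ |p - y| + |y - 1| := abs_sub_le p y 1
    _ ≤ r * 2 + s := add_le_add (hp.trans (mul_le_mul_of_nonneg_left hy2 hr)) hy
    _ = 2 * r + s := by ring

lemma sqrt_div_pi_mul_sqrt_eq {c : ℝ} (hc : 0 < c) (x : ℝ) :
    √c / π * √(1 - x ^ 2 / c) = √(√c ^ 2 - x ^ 2) / π := by
  rw [div_mul_eq_mul_div, ← sqrt_mul hc.le, sq_sqrt hc.le, mul_sub, mul_div_cancel₀ _ hc.ne',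
    mul_one]

lemma inv_sq_le_pow_div_sub_abs_pow {N x : ℝ} (hx : |x| < N) :
    1 / N ^ 2 ≤ N ^ 5 / (N - |x|) ^ 7 := by
  have hN : 0 < N := (abs_nonneg x).trans_lt hx
  have : 0 < N - |x| := sub_pos.2 hx
  calc 1 / N ^ 2 = N ^ 5 / N ^ 7 := by field_simp
    _ ≤ N ^ 5 / (N - |x|) ^ 7 := by
      gcongr
      linarith [abs_nonneg x]

theorem abs_gueDiagKernel_sub_le {n : ℕ} {x : ℝ} (hx : |x| < √(2 * (n + 1 : ℕ))) :
    |gueDiagKernel n x - √(√(2 * (n + 1 : ℕ)) ^ 2 - x ^ 2) / π| ≤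
      7 * (√(2 * (n + 1 : ℕ)) ^ 5 / (√(2 * (n + 1 : ℕ)) - |x|) ^ 7) *
        (√(√(2 * (n + 1 : ℕ)) ^ 2 - x ^ 2) / π) := by
  have hadiabatic := (isHermitePair_hermiteFunction n).abs_diagKernel_div_sqrt_sub_le hx
  have hcenter := abs_pi_mul_gueDiagKernel_zero_div_sub_one_le n
  have hedge := inv_sq_le_pow_div_sub_abs_pow hx
  rw [← gueDiagKernel] at hadiabatic
  have hN2 : √(2 * (n + 1 : ℕ)) ^ 2 = 2 * (n + 1 : ℕ) := sq_sqrt (by positivity)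
  set N := √(2 * (n + 1 : ℕ))
  set w := √(N ^ 2 - x ^ 2)
  set y := π * (gueDiagKernel n 0 / N)
  set R := N ^ 5 / (N - |x|) ^ 7
  have hw : 0 < w := sqrt_pos.2 (sub_pos.2 (sq_lt_sq' (neg_lt_of_abs_lt hx) (lt_of_abs_lt hx)))
  have hn : (1 : ℝ) / (n + 1 : ℕ) = 2 * (1 / N ^ 2) := by rw [hN2]; field_simp
  have : 0 ≤ R := le_trans (by positivity) hedge
  have hrel : |π * (gueDiagKernel n x / w) - y| ≤ 5 / 2 * R * y := by
    rw [← mul_sub, abs_mul, abs_of_pos pi_pos, mul_left_comm]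
    exact mul_le_mul_of_nonneg_left hadiabatic pi_nonneg
  have hratio : |π * (gueDiagKernel n x / w) - 1| ≤ 7 * R :=
    calc _ ≤ 2 * (5 / 2 * R) + 1 / (n + 1 : ℕ) :=
          abs_sub_one_le_of_abs_sub_le_mul (by positivity)
            (div_le_one_of_le₀ (by simp) (by positivity)) hrel hcenter
      _ ≤ 7 * R := by linarith
  calc |gueDiagKernel n x - w / π| = |π * (gueDiagKernel n x / w) - 1| * (w / π) := by
        rw [← abs_of_pos (div_pos hw pi_pos), ← abs_mul, abs_of_pos (div_pos hw pi_pos)]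
        congr 1
        field_simp
    _ ≤ 7 * R * (w / π) := by gcongr

lemma mul_sqrt_le_sqrt_two_mul_sub_abs {n ε x : ℝ} (hx : |x| ≤ (√2 - ε) * √n) :
    ε * √n ≤ √(2 * n) - |x| := by
  rw [sqrt_mul zero_le_two]
  linarith

lemma sqrt_two_mul_pow_div_pow_le {n ε δ : ℝ} (hn : 0 < n) (hε : 0 < ε) (hδ : ε * √n ≤ δ) :
    √(2 * n) ^ 5 / δ ^ 7 ≤ √2 ^ 5 / ε ^ 7 / n :=
  calc √(2 * n) ^ 5 / δ ^ 7 ≤ √(2 * n) ^ 5 / (ε * √n) ^ 7 := by gcongr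
    _ = √2 ^ 5 / ε ^ 7 / √n ^ 2 := by
      rw [sqrt_mul zero_le_two]
      field_simp
    _ = √2 ^ 5 / ε ^ 7 / n := by rw [sq_sqrt hn.le]

end Semicircle

theorem wigner_semicircle_GUE_kernel_diagonal_general
    (H : ℕ → ℝ → ℝ)
    (hH : ∀ m x, H m x = (2 : ℝ) ^ ((m : ℝ) / 2) *
      Polynomial.aeval (x * √2) (Polynomial.hermite m))
    (n : ℕ) (x : ℝ) (hx : |x| < √(2 * n)) :
    |exp (-x ^ 2) / (2 ^ n * ((n - 1).factorial : ℝ) * √π) *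
        (deriv (H n) x * H (n - 1) x - deriv (H (n - 1)) x * H n x) -
      √(2 * n) / π * √(1 - x ^ 2 / (2 * n))| ≤
      7 * (√(2 * n) ^ 5 / (√(2 * n) - |x|) ^ 7) * (√(2 * n) / π * √(1 - x ^ 2 / (2 * n))) := by
  obtain rfl : H = physHermite := funext₂ hH
  cases n with
  | zero => simp [(abs_nonneg x).not_gt] at hx
  | succ n =>
    rw [Nat.add_sub_cancel, ← gueDiagKernel_eq_wronskian, sqrt_div_pi_mul_sqrt_eq (by positivity)]
    exact abs_gueDiagKernel_sub_le hx

/-- **Wigner semicircle law for the diagonal of the GUE kernel.**  Let `H m` be the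
`m`-th physicists' Hermite polynomial.  For every `ε > 0` there is `C` such that for all
`n ≥ 1` and all `x` with `|x| ≤ (√2 - ε)√n`, the diagonal kernel value
`K n (x,x) = e^{-x²}/(2ⁿ (n-1)! √π) · (Hₙ'(x) H_{n-1}(x) - H_{n-1}'(x) Hₙ(x))`
satisfies `|K n (x,x) - (√(2n)/π)√(1 - x²/(2n))| ≤ (C/n)(√(2n)/π)√(1 - x²/(2n))`. -/
theorem wigner_semicircle_GUE_kernel_diagonal
    (H : ℕ → ℝ → ℝ)
    (hH : ∀ m x, H m x = (2 : ℝ) ^ ((m : ℝ) / 2) *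
      Polynomial.aeval (x * Real.sqrt 2) (Polynomial.hermite m))
    (ε : ℝ) (hε : 0 < ε) :
    ∃ C : ℝ, ∀ n : ℕ, 1 ≤ n → ∀ x : ℝ,
      |x| ≤ (Real.sqrt 2 - ε) * Real.sqrt n →
      ∀ Kdiag : ℝ,
      Kdiag = Real.exp (-x ^ 2) / (2 ^ n * ((n - 1).factorial : ℝ) * Real.sqrt π) *
        (deriv (H n) x * H (n - 1) x - deriv (H (n - 1)) x * H n x) →
      |Kdiag - Real.sqrt (2 * n) / π * Real.sqrt (1 - x ^ 2 / (2 * n))| ≤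
        C / n * (Real.sqrt (2 * n) / π * Real.sqrt (1 - x ^ 2 / (2 * n))) := by
  refine ⟨7 * (√2 ^ 5 / ε ^ 7), fun n hn x hx Kdiag hK ↦ ?_⟩
  have hgap := mul_sqrt_le_sqrt_two_mul_sub_abs hx
  have hlt : |x| < √(2 * n) := sub_pos.1 (lt_of_lt_of_le (by positivity) hgap)
  rw [hK, mul_div_assoc]
  refine (wigner_semicircle_GUE_kernel_diagonal_general H hH n x hlt).trans ?_
  refine mul_le_mul_of_nonneg_right (mul_le_mul_of_nonneg_left ?_ (by norm_num)) (by positivity)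
  exact sqrt_two_mul_pow_div_pow_le (by positivity) hε hgap
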